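/- arXiv:1411.2374 — 2 statements merged into one kernel-verified Lean document; each statement's English description precedes it below -/
import Mathlib

section
/- Let (h_k)_{k≥0} be a sequence of nonnegative reals and C > 0 such that for every k ≥ 0 and every γ ∈ [0,1], h_{k+1} ≤ (1 − γ) h_k + (γ²/2) C. Then for every k ≥ 1, h_k ≤ 2C/(k + 2). -/
/-- The standard Frank–Wolfe recursion: if a sequence of nonnegative reals satisfies
`h_{k+1} ≤ (1 − γ)·h_k + (γ²/2)·C` for every `γ ∈ [0,1]`, then `h_k ≤ 2C/(k+2)`
for every `k ≥ 1`. -/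
theorem frank_wolfe_rate (h : ℕ → ℝ) (C : ℝ) (hC : 0 < C)
    (hnonneg : ∀ k, 0 ≤ h k)
    (hrec : ∀ k, ∀ γ ∈ Set.Icc (0:ℝ) 1, h (k + 1) ≤ (1 - γ) * h k + γ^2 / 2 * C) :
    ∀ k : ℕ, 1 ≤ k → h k ≤ 2 * C / (k + 2) := by
  intro k hk
  induction k, hk using Nat.le_induction with
  | base =>
    have h1 := hrec 0 1 (by simp)
    norm_num at h1 ⊢
    linarith
  | succ k hk ih =>
    have hk0 : (0:ℝ) ≤ k := Nat.cast_nonneg k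
    have hp : (0:ℝ) < (k:ℝ) + 2 := by linarith
    have hg : 2 / ((k:ℝ) + 2) ≤ 1 := by
      rw [div_le_one hp]; linarith
    have h1 := hrec k (2 / ((k:ℝ) + 2)) ⟨by positivity, hg⟩
    have h2 : (1 - 2 / ((k:ℝ) + 2)) * h k ≤ (1 - 2 / ((k:ℝ) + 2)) * (2 * C / (k + 2)) :=
      mul_le_mul_of_nonneg_left ih (by linarith)
    have h3 : (1 - 2 / ((k:ℝ) + 2)) * (2 * C / (k + 2)) + (2 / ((k:ℝ) + 2))^2 / 2 * C
        = 2 * C * (k + 1) / (k + 2)^2 := by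
      field_simp
      ring
    have h4 : 2 * C * ((k:ℝ) + 1) / (k + 2)^2 ≤ 2 * C / (((k + 1 : ℕ) : ℝ) + 2) := by
      push_cast
      rw [div_le_div_iff₀ (by positivity) (by positivity)]
      nlinarith
    linarith
end

section
/- Let λ > 0, let A¹,…,A^T be d×d real matrices, L = (1/T) Σ_{t=1}^T ‖A^t‖_F², f(M) = (1/T) Σ_{t=1}^T ℓ(⟨A^t, M⟩), and let M* minimize f over D_λ = conv(B_λ). Let (M^{(k)})_{k≥0} be any sequence in D_λ with M^{(0)} ∈ B_λ such that for every k, choosing B^{(k)} ∈ argmin_{B ∈ B_λ} ⟨B, ∇f(M^{(k)})⟩, the next iterate satisfies f(M^{(k+1)}) ≤ f(M^{(k)} + γ (B^{(k)} − M^{(k)})) for all γ ∈ [0,1]. Then for every k ≥ 1, f(M^{(k)}) − f(M*) ≤ 16 L λ² / (k + 2). -/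
/-- The smoothed hinge loss. -/
noncomputable def smoothedHinge (x : ℝ) : ℝ :=
  if 1 ≤ x then 0 else if x ≤ 0 then 1/2 - x else (1/2) * (1 - x)^2

/-- The Frobenius inner product of two d×d real matrices. -/
def frobInner {d : ℕ} (A M : Matrix (Fin d) (Fin d) ℝ) : ℝ :=
  ∑ a, ∑ b, A a b * M a b

/-- The Frobenius norm of a matrix. -/
noncomputable def frobNorm {d : ℕ} (A : Matrix (Fin d) (Fin d) ℝ) : ℝ :=
  Real.sqrt (frobInner A A)

/-- The basis element `P_λ^{(ij)} = λ (e_i + e_j)(e_i + e_j)ᵀ`. -/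
noncomputable def Pbasis (d : ℕ) (lam : ℝ) (i j : Fin d) : Matrix (Fin d) (Fin d) ℝ :=
  lam • Matrix.vecMulVec (Pi.single i 1 + Pi.single j 1) (Pi.single i 1 + Pi.single j 1)

/-- The basis element `N_λ^{(ij)} = λ (e_i − e_j)(e_i − e_j)ᵀ`. -/
noncomputable def Nbasis (d : ℕ) (lam : ℝ) (i j : Fin d) : Matrix (Fin d) (Fin d) ℝ :=
  lam • Matrix.vecMulVec (Pi.single i 1 - Pi.single j 1) (Pi.single i 1 - Pi.single j 1)

/-- The basis set `B_λ = ⋃_{i≠j} {P_λ^{(ij)}, N_λ^{(ij)}}`. -/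
noncomputable def basisSet (d : ℕ) (lam : ℝ) : Set (Matrix (Fin d) (Fin d) ℝ) :=
  {B | ∃ i j : Fin d, i ≠ j ∧ (B = Pbasis d lam i j ∨ B = Nbasis d lam i j)}

/-- The objective `f(M) = (1/T) Σ_t ℓ(⟨Aᵗ, M⟩)`. -/
noncomputable def objective {d T : ℕ} (A : Fin T → Matrix (Fin d) (Fin d) ℝ)
    (M : Matrix (Fin d) (Fin d) ℝ) : ℝ :=
  (1 / (T : ℝ)) * ∑ t, smoothedHinge (frobInner (A t) M)

/-- The gradient `∇f(M) = (1/T) Σ_t Gᵗ` of the objective. -/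
noncomputable def objectiveGrad {d T : ℕ} (A : Fin T → Matrix (Fin d) (Fin d) ℝ)
    (M : Matrix (Fin d) (Fin d) ℝ) : Matrix (Fin d) (Fin d) ℝ :=
  (1 / (T : ℝ)) • ∑ t, (if 1 ≤ frobInner (A t) M then 0
    else if frobInner (A t) M ≤ 0 then -(A t)
    else (frobInner (A t) M - 1) • A t)

/-- Derivative of the smoothed hinge loss. -/
noncomputable def hingeDer (x : ℝ) : ℝ :=
  if 1 ≤ x then 0 else if x ≤ 0 then -1 else x - 1

lemma hinge_smooth (x y : ℝ) :
    smoothedHinge y ≤ smoothedHinge x + hingeDer x * (y - x) + (1/2) * (y - x)^2 := by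
  unfold smoothedHinge hingeDer
  split_ifs <;> nlinarith [sq_nonneg (y - x), sq_nonneg (y - 1), sq_nonneg (x - 1), sq_nonneg y, sq_nonneg x, sq_nonneg (y - x - 1)]

lemma hinge_convex (x y : ℝ) :
    smoothedHinge x + hingeDer x * (y - x) ≤ smoothedHinge y := by
  unfold smoothedHinge hingeDer
  split_ifs <;> nlinarith [sq_nonneg (y - x), sq_nonneg (y - 1), sq_nonneg (x - 1), sq_nonneg y, sq_nonneg x, sq_nonneg (y - x - 1)]

lemma fi_comm {d : ℕ} (X Y : Matrix (Fin d) (Fin d) ℝ) : frobInner X Y = frobInner Y X := by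
  unfold frobInner
  exact Finset.sum_congr rfl fun a _ => Finset.sum_congr rfl fun b _ => mul_comm _ _

lemma fi_add {d : ℕ} (X Y Z : Matrix (Fin d) (Fin d) ℝ) :
    frobInner X (Y + Z) = frobInner X Y + frobInner X Z := by
  simp [frobInner, mul_add, Finset.sum_add_distrib]

lemma fi_sub {d : ℕ} (X Y Z : Matrix (Fin d) (Fin d) ℝ) :
    frobInner X (Y - Z) = frobInner X Y - frobInner X Z := by
  simp [frobInner, mul_sub, Finset.sum_sub_distrib]

lemma fi_smul {d : ℕ} (X Y : Matrix (Fin d) (Fin d) ℝ) (c : ℝ) :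
    frobInner X (c • Y) = c * frobInner X Y := by
  simp [frobInner, Finset.mul_sum, mul_left_comm]

lemma fi_sum {d T : ℕ} (X : Matrix (Fin d) (Fin d) ℝ) (Y : Fin T → Matrix (Fin d) (Fin d) ℝ) :
    frobInner X (∑ t, Y t) = ∑ t, frobInner X (Y t) := by
  let F : Matrix (Fin d) (Fin d) ℝ →+ ℝ :=
    { toFun := frobInner X, map_zero' := by simp [frobInner], map_add' := fi_add X }
  exact map_sum F Y Finset.univ

lemma fi_self_nonneg {d : ℕ} (X : Matrix (Fin d) (Fin d) ℝ) : 0 ≤ frobInner X X :=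
  Finset.sum_nonneg fun _ _ => Finset.sum_nonneg fun _ _ => mul_self_nonneg _

lemma fi_cs {d : ℕ} (X Y : Matrix (Fin d) (Fin d) ℝ) :
    (frobInner X Y)^2 ≤ frobInner X X * frobInner Y Y := by
  have h := Finset.sum_mul_sq_le_sq_mul_sq (Finset.univ : Finset (Fin d × Fin d))
    (fun p => X p.1 p.2) (fun p => Y p.1 p.2)
  simpa [Fintype.sum_prod_type, frobInner, pow_two] using h

lemma fi_grad {d T : ℕ} (A : Fin T → Matrix (Fin d) (Fin d) ℝ)
    (X M : Matrix (Fin d) (Fin d) ℝ) :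
    frobInner X (objectiveGrad A M) =
      (1 / (T : ℝ)) * ∑ t, hingeDer (frobInner (A t) M) * frobInner (A t) X := by
  unfold objectiveGrad
  rw [fi_smul, fi_sum]
  congr 1
  refine Finset.sum_congr rfl fun t _ => ?_
  have : (if 1 ≤ frobInner (A t) M then 0 else if frobInner (A t) M ≤ 0 then -(A t)
      else (frobInner (A t) M - 1) • A t) = hingeDer (frobInner (A t) M) • A t := by
    unfold hingeDer; split_ifs <;> simp
  rw [this, fi_smul, fi_comm X]

lemma obj_convex {d T : ℕ} (A : Fin T → Matrix (Fin d) (Fin d) ℝ)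
    (M N : Matrix (Fin d) (Fin d) ℝ) :
    objective A M + frobInner (N - M) (objectiveGrad A M) ≤ objective A N := by
  rw [fi_grad]
  unfold objective
  rw [← mul_add, ← Finset.sum_add_distrib]
  refine mul_le_mul_of_nonneg_left (Finset.sum_le_sum fun t _ => ?_) (by positivity)
  rw [fi_sub]
  exact hinge_convex _ _

lemma obj_smooth {d T : ℕ} (A : Fin T → Matrix (Fin d) (Fin d) ℝ)
    (M D : Matrix (Fin d) (Fin d) ℝ) (γ : ℝ) :
    objective A (M + γ • D) ≤ objective A M + γ * frobInner D (objectiveGrad A M)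
      + (1/2) * γ^2 * (((1 / (T : ℝ)) * ∑ t, (frobNorm (A t))^2) * frobInner D D) := by
  rw [fi_grad]
  unfold objective
  have e : ∀ t, smoothedHinge (frobInner (A t) (M + γ • D)) ≤
      smoothedHinge (frobInner (A t) M) + γ * (hingeDer (frobInner (A t) M) * frobInner (A t) D)
      + (1/2) * γ^2 * ((frobNorm (A t))^2 * frobInner D D) := by
    intro t
    have h := hinge_smooth (frobInner (A t) M) (frobInner (A t) (M + γ • D))
    rw [fi_add, fi_smul] at h ⊢
    have h2 := fi_cs (A t) D
    have h3 : (frobNorm (A t))^2 = frobInner (A t) (A t) := Real.sq_sqrt (fi_self_nonneg _)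
    rw [h3]
    have h4 := mul_le_mul_of_nonneg_left h2 (by positivity : 0 ≤ (1/2) * γ^2)
    nlinarith
  have h := mul_le_mul_of_nonneg_left (Finset.sum_le_sum fun t (_ : t ∈ Finset.univ) => e t)
    (by positivity : 0 ≤ 1 / (T : ℝ))
  refine h.trans (le_of_eq ?_)
  simp only [Finset.sum_add_distrib, ← Finset.mul_sum, ← Finset.sum_mul]
  ring

lemma fi_rank {d : ℕ} (l : ℝ) (u v : Fin d → ℝ) :
    frobInner (l • Matrix.vecMulVec u u) (l • Matrix.vecMulVec v v) = l^2 * (u ⬝ᵥ v)^2 := by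
  simp only [frobInner, dotProduct, Matrix.smul_apply, Matrix.vecMulVec_apply, smul_eq_mul]
  rw [pow_two (∑ i, u i * v i), Finset.sum_mul_sum, Finset.mul_sum]
  refine Finset.sum_congr rfl fun a _ => ?_
  rw [Finset.mul_sum]
  exact Finset.sum_congr rfl fun b _ => by ring

lemma basis_rep {d : ℕ} {l : ℝ} {B : Matrix (Fin d) (Fin d) ℝ} (hB : B ∈ basisSet d l) :
    ∃ u : Fin d → ℝ, u ⬝ᵥ u = 2 ∧ B = l • Matrix.vecMulVec u u := by
  obtain ⟨i, j, hij, rfl | rfl⟩ := hB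
  · exact ⟨_, by simp [hij, hij.symm]; norm_num, rfl⟩
  · exact ⟨_, by simp [hij, hij.symm]; norm_num, rfl⟩

lemma fi_dist {d : ℕ} (X Y : Matrix (Fin d) (Fin d) ℝ) :
    frobInner (X - Y) (X - Y) = frobInner X X - 2 * frobInner X Y + frobInner Y Y := by
  rw [fi_sub, fi_comm _ X, fi_comm _ Y, fi_sub, fi_sub, fi_comm Y X]; ring

lemma fi_hull {d : ℕ} {l : ℝ} {B M : Matrix (Fin d) (Fin d) ℝ} (hB : B ∈ basisSet d l)
    (hM : M ∈ convexHull ℝ (basisSet d l)) : frobInner (B - M) (B - M) ≤ 8 * l^2 := by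
  refine convexHull_min (t := {M | frobInner (B - M) (B - M) ≤ 8 * l^2}) ?_ ?_ hM
  · intro C hC
    obtain ⟨u, hu, rfl⟩ := basis_rep hB
    obtain ⟨v, hv, rfl⟩ := basis_rep hC
    simp only [Set.mem_ofPred_eq]
    rw [fi_dist, fi_rank, fi_rank, fi_rank, hu, hv]
    nlinarith [mul_nonneg (sq_nonneg l) (sq_nonneg (u ⬝ᵥ v))]
  · intro X hX Y hY a b ha hb hab
    simp only [Set.mem_ofPred_eq] at *
    have h := mul_nonneg (mul_nonneg ha hb) (fi_self_nonneg (X - Y))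
    have e : frobInner (a • X + b • Y) (a • X + b • Y) =
        a^2 * frobInner X X + 2 * a * b * frobInner X Y + b^2 * frobInner Y Y := by
      rw [fi_add, fi_smul, fi_smul, fi_comm _ X, fi_comm _ Y, fi_add, fi_add, fi_smul, fi_smul,
        fi_smul, fi_smul, fi_comm Y X]; ring
    rw [fi_dist] at *
    rw [e, fi_add, fi_smul, fi_smul]
    obtain rfl : b = 1 - a := by linarith
    nlinarith [mul_le_mul_of_nonneg_left hX ha, mul_le_mul_of_nonneg_left hY hb]

lemma lin_hull {d : ℕ} {l : ℝ} {B G M : Matrix (Fin d) (Fin d) ℝ}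
    (h : ∀ B' ∈ basisSet d l, frobInner B G ≤ frobInner B' G)
    (hM : M ∈ convexHull ℝ (basisSet d l)) : frobInner B G ≤ frobInner M G := by
  refine convexHull_min (t := {M | frobInner B G ≤ frobInner M G}) h ?_ hM
  intro X hX Y hY a b ha hb hab
  simp only [Set.mem_ofPred_eq] at *
  rw [fi_comm (_ + _), fi_add, fi_smul, fi_smul, fi_comm G, fi_comm G]
  obtain rfl : b = 1 - a := by linarith
  nlinarith [mul_le_mul_of_nonneg_left hX ha, mul_le_mul_of_nonneg_left hY hb]

/-- Convergence of the Frank–Wolfe iterates for the similarity learning problem: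
if the iterates `M^{(k)}` stay in `D_λ = conv(B_λ)`, start at a basis element, and each
step does at least as well as exact line search towards the forward direction
`B^{(k)} ∈ argmin_{B ∈ B_λ} ⟨B, ∇f(M^{(k)})⟩`, then
`f(M^{(k)}) − f(M*) ≤ 16Lλ²/(k+2)` for all `k ≥ 1`, where
`L = (1/T) Σ_t ‖Aᵗ‖_F²` and `M*` minimizes `f` over `D_λ`. -/
theorem hdsl_frank_wolfe_convergence {d T : ℕ} (lam : ℝ) (hlam : 0 < lam)
    (A : Fin T → Matrix (Fin d) (Fin d) ℝ)
    (L : ℝ) (hL : L = (1 / (T : ℝ)) * ∑ t, (frobNorm (A t))^2)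
    (Mstar : Matrix (Fin d) (Fin d) ℝ)
    (hMstar : Mstar ∈ convexHull ℝ (basisSet d lam))
    (hmin : ∀ N ∈ convexHull ℝ (basisSet d lam), objective A Mstar ≤ objective A N)
    (M : ℕ → Matrix (Fin d) (Fin d) ℝ)
    (hM0 : M 0 ∈ basisSet d lam)
    (hMfeas : ∀ k, M k ∈ convexHull ℝ (basisSet d lam))
    (hstep : ∀ k, ∃ B ∈ basisSet d lam,
      (∀ B' ∈ basisSet d lam,
        frobInner B (objectiveGrad A (M k)) ≤ frobInner B' (objectiveGrad A (M k))) ∧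
      (∀ γ ∈ Set.Icc (0:ℝ) 1,
        objective A (M (k + 1)) ≤ objective A (M k + γ • (B - M k)))) :
    ∀ k : ℕ, 1 ≤ k →
      objective A (M k) - objective A Mstar ≤ 16 * L * lam^2 / (k + 2) := by
  have hL0 : 0 ≤ L := by rw [hL]; positivity
  set C : ℝ := 8 * L * lam^2 with hC
  have hC0 : 0 ≤ C := by positivity
  have hrec : ∀ k, ∀ γ ∈ Set.Icc (0:ℝ) 1, objective A (M (k+1)) - objective A Mstar ≤
      (1 - γ) * (objective A (M k) - objective A Mstar) + (1/2) * γ^2 * C := by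
    intro k γ hγ
    obtain ⟨B, hB, hBmin, hls⟩ := hstep k
    have h1 := hls γ hγ
    have h2 := obj_smooth A (M k) (B - M k) γ
    rw [← hL] at h2
    have h3 := mul_le_mul_of_nonneg_left (fi_hull hB (hMfeas k)) hL0
    have h4 := mul_le_mul_of_nonneg_left h3 (by positivity : 0 ≤ (1/2) * γ^2)
    have h5 := lin_hull hBmin hMstar
    have h6 := obj_convex A (M k) Mstar
    rw [fi_comm, fi_sub, fi_comm _ Mstar] at h6
    rw [fi_comm (B - M k) (objectiveGrad A (M k)), fi_sub, fi_comm _ B] at h2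
    have h7 : frobInner B (objectiveGrad A (M k)) - frobInner (objectiveGrad A (M k)) (M k) ≤
      objective A Mstar - objective A (M k) := by linarith
    have h8 := mul_le_mul_of_nonneg_left h7 hγ.1
    have h9 : (1/2) * γ^2 * (L * (8 * lam^2)) = (1/2) * γ^2 * C := by rw [hC]; ring
    linarith
  have key : ∀ k : ℕ, objective A (M (k+1)) - objective A Mstar ≤ 2 * C / (k + 3) := by
    intro k
    induction k with
    | zero =>
      have := hrec 0 1 (by simp)
      norm_num at this ⊢
      linarith
    | succ k ih =>
      have hk : (0:ℝ) ≤ k := Nat.cast_nonneg k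
      have h := hrec (k+1) (2 / (k+3)) ⟨by positivity, by rw [div_le_one (by positivity)]; linarith⟩
      have h1 : (0:ℝ) ≤ 1 - 2 / (k+3) := by
        rw [sub_nonneg, div_le_one (by positivity)]; linarith
      have h2 := mul_le_mul_of_nonneg_left ih h1
      refine (h.trans (add_le_add_left h2 _)).trans ?_
      have e : (1 - 2 / ((k:ℝ)+3)) * (2 * C / (k+3)) + 1/2 * (2 / ((k:ℝ)+3))^2 * C
          = 2 * C * ((k+2) / (k+3)^2) := by
        field_simp; ring
      have e2 : 2 * C / (((k + 1 : ℕ) : ℝ) + 3) = 2 * C * (1 / ((k:ℝ) + 4)) := by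
        push_cast; rw [mul_one_div]; congr 1; ring
      have h3 : ((k:ℝ)+2) / (k+3)^2 ≤ 1 / ((k:ℝ) + 4) := by
        rw [div_le_div_iff₀ (by positivity) (by positivity)]
        nlinarith
      rw [e, e2]
      exact mul_le_mul_of_nonneg_left h3 (by positivity)
  intro k hk
  obtain ⟨n, rfl⟩ : ∃ n, k = n + 1 := ⟨k - 1, by omega⟩
  refine (key n).trans (le_of_eq ?_)
  rw [hC]; push_cast
  congr 1 <;> ring
end
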